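/- Let n ≥ 2 and let K, T ⊆ ℝⁿ be convex bodies. Then vol((∂K + ∂T)/2) = √(vol(K)·vol(T)) holds if and only if either T is a translate of K, or n = 2 and K and T are homothetic to each other (i.e., T = x + rK for some x ∈ ℝ² and r > 0) and K is centrally symmetric up to translation (i.e., −K is a translate of K). -/

import Mathlib

open MeasureTheory Pointwise

open scoped ENNReal

/-- The one-dimensional Brunn–Minkowski inequality for compact sets. -/
lemma volume_add_volume_le_of_isCompact {A B : Set ℝ} (hA : IsCompact A) (hB : IsCompact B)
    (hA' : A.Nonempty) (hB' : B.Nonempty) : volume A + volume B ≤ volume (A + B) := by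
  obtain ⟨a, haA, ha⟩ := hA.exists_isGreatest hA'
  obtain ⟨b, hbB, hb⟩ := hB.exists_isLeast hB'
  have hsub : (b +ᵥ A) ∪ (a +ᵥ B) ⊆ A + B := by
    rintro _ (⟨x, hx, rfl⟩ | ⟨x, hx, rfl⟩)
    · exact ⟨x, hx, b, hbB, by simp [add_comm]⟩
    · exact ⟨a, haA, x, hx, by simp⟩
  have hinter : volume ((b +ᵥ A) ∩ (a +ᵥ B)) = 0 := by
    refine measure_mono_null ?_ (measure_singleton (a + b))
    rintro _ ⟨⟨x, hx, rfl⟩, ⟨y, hy, hxy⟩⟩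
    have h1 := ha hx
    have h2 := hb hy
    simp only [vadd_eq_add, Set.mem_singleton_iff] at hxy ⊢
    linarith
  calc volume A + volume B = volume (b +ᵥ A) + volume (a +ᵥ B) := by
        rw [measure_vadd, measure_vadd]
    _ = volume ((b +ᵥ A) ∪ (a +ᵥ B)) := by
        rw [← measure_union_add_inter _ (hB.vadd a).measurableSet, hinter, add_zero]
    _ ≤ _ := measure_mono hsub

/-- The one-dimensional Brunn–Minkowski inequality for measurable sets. -/
lemma volume_add_volume_le {A B : Set ℝ} (hA : MeasurableSet A) (hB : MeasurableSet B)
    (hA' : A.Nonempty) (hB' : B.Nonempty) : volume A + volume B ≤ volume (A + B) := by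
  obtain ⟨a, ha⟩ := hA'
  obtain ⟨b, hb⟩ := hB'
  rw [hA.measure_eq_iSup_isCompact, hB.measure_eq_iSup_isCompact]
  simp only [iSup_and']
  refine ENNReal.biSup_add_biSup_le' (p := fun S : Set ℝ => S ⊆ A ∧ IsCompact S)
    (q := fun S : Set ℝ => S ⊆ B ∧ IsCompact S) ⟨∅, Set.empty_subset _, isCompact_empty⟩
    ⟨∅, Set.empty_subset _, isCompact_empty⟩ ?_
  intro S ⟨hSA, hS⟩ U ⟨hUB, hU⟩
  calc volume S + volume U ≤ volume (insert a S) + volume (insert b U) := by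
        gcongr <;> exact Set.subset_insert _ _
    _ ≤ volume (insert a S + insert b U) :=
        volume_add_volume_le_of_isCompact (hS.insert a) (hU.insert b)
          (Set.insert_nonempty _ _) (Set.insert_nonempty _ _)
    _ ≤ _ := measure_mono (Set.add_subset_add (Set.insert_subset ha hSA)
          (Set.insert_subset hb hUB))

lemma lintegral_eq_lintegral_Ioi_meas_lt {f : ℝ → ℝ≥0∞} (hf : Measurable f) (hf1 : ∀ x, f x ≤ 1) :
    ∫⁻ x, f x = ∫⁻ t in Set.Ioi (0 : ℝ), volume {x | ENNReal.ofReal t < f x} := by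
  have hfin : ∀ x, f x ≠ ∞ := fun x => ((hf1 x).trans_lt ENNReal.one_lt_top).ne
  have h := lintegral_eq_lintegral_meas_lt (volume : Measure ℝ) (f := fun x => (f x).toReal)
    (Filter.Eventually.of_forall fun x => ENNReal.toReal_nonneg) hf.ennreal_toReal.aemeasurable
  simp only [ENNReal.ofReal_toReal (hfin _)] at h
  rw [h]
  refine setLIntegral_congr_fun measurableSet_Ioi fun t ht => ?_
  simp only [ENNReal.ofReal_lt_iff_lt_toReal (le_of_lt ht) (hfin _)]

lemma ENNReal.geom_mean_le_arith_mean2 {a b : ℝ} (ha : 0 < a) (hb : 0 < b) (hab : a + b = 1)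
    (x y : ℝ≥0∞) : x ^ a * y ^ b ≤ ENNReal.ofReal a * x + ENNReal.ofReal b * y := by
  by_cases hx : x = ∞
  · simp [hx, ha, ENNReal.mul_top]
  by_cases hy : y = ∞
  · simp [hy, hb, ENNReal.mul_top]
  lift x to NNReal using hx
  lift y to NNReal using hy
  have h := NNReal.geom_mean_le_arith_mean2_weighted a.toNNReal b.toNNReal x y (by
    rw [← Real.toNNReal_add ha.le hb.le, hab, Real.toNNReal_one])
  rw [Real.coe_toNNReal _ ha.le, Real.coe_toNNReal _ hb.le] at h
  rw [ENNReal.ofReal, ENNReal.ofReal, ← ENNReal.coe_rpow_of_nonneg _ ha.le,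
    ← ENNReal.coe_rpow_of_nonneg _ hb.le]
  exact_mod_cast h

lemma arith_mean_lintegral_le_of_normalized {a b : ℝ} (ha : 0 < a) (hb : 0 < b) (hab : a + b = 1)
    {f g h : ℝ → ℝ≥0∞} (hf : Measurable f) (hg : Measurable g) (hh : Measurable h)
    (hf1 : ∀ x, f x ≤ 1) (hg1 : ∀ x, g x ≤ 1)
    (hf2 : ∀ t < 1, ∃ x, t < f x) (hg2 : ∀ t < 1, ∃ x, t < g x)
    (hfgh : ∀ x y, f x ^ a * g y ^ b ≤ h (a * x + b * y)) :
    ENNReal.ofReal a * (∫⁻ x, f x) + ENNReal.ofReal b * (∫⁻ x, g x) ≤ ∫⁻ x, h x := by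
  have key : ∀ t ∈ Set.Ioi (0 : ℝ), ENNReal.ofReal a * volume {x | ENNReal.ofReal t < f x} +
      ENNReal.ofReal b * volume {x | ENNReal.ofReal t < g x} ≤
      volume {x | ENNReal.ofReal t < min (h x) 1} := by
    intro t ht
    set s := ENNReal.ofReal t
    by_cases hs : s < 1
    · have hmf : MeasurableSet {x | s < f x} := measurableSet_lt measurable_const hf
      have hmg : MeasurableSet {x | s < g x} := measurableSet_lt measurable_const hg
      have h1 := volume_add_volume_le (hmf.const_smul_of_ne_zero ha.ne')
        (hmg.const_smul_of_ne_zero hb.ne') (Set.Nonempty.smul_set (hf2 s hs))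
        (Set.Nonempty.smul_set (hg2 s hs))
      simp only [Measure.addHaar_smul, Module.finrank_self, pow_one, abs_of_pos ha,
        abs_of_pos hb] at h1
      refine h1.trans (measure_mono ?_)
      rintro _ ⟨_, ⟨x, hx, rfl⟩, _, ⟨y, hy, rfl⟩, rfl⟩
      refine lt_min ?_ hs
      refine lt_of_lt_of_le ?_ (hfgh x y)
      have hs0 : s ≠ 0 := by simpa [s] using ht
      calc s = s ^ a * s ^ b := by
            rw [← ENNReal.rpow_add _ _ hs0 hs.ne_top, hab, ENNReal.rpow_one]
        _ < f x ^ a * g y ^ b :=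
            ENNReal.mul_lt_mul (ENNReal.rpow_lt_rpow hx ha) (ENNReal.rpow_lt_rpow hy hb)
    · have e1 : {x | s < f x} = ∅ := by
        ext x; simpa using (hf1 x).trans (not_lt.1 hs)
      have e2 : {x | s < g x} = ∅ := by
        ext x; simpa using (hg1 x).trans (not_lt.1 hs)
      simp [e1, e2]
  have hmeas : ∀ k : ℝ → ℝ≥0∞, Measurable fun t : ℝ => volume {x | ENNReal.ofReal t < k x} := by
    intro k
    refine Antitone.measurable fun t s hts => measure_mono fun x hx => ?_
    exact lt_of_le_of_lt (ENNReal.ofReal_le_ofReal hts) hx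
  calc _ = ∫⁻ t in Set.Ioi (0 : ℝ), (ENNReal.ofReal a * volume {x | ENNReal.ofReal t < f x} +
      ENNReal.ofReal b * volume {x | ENNReal.ofReal t < g x}) := by
        rw [lintegral_add_left ((hmeas f).const_mul _), lintegral_const_mul _ (hmeas f),
          lintegral_const_mul _ (hmeas g), lintegral_eq_lintegral_Ioi_meas_lt hf hf1,
          lintegral_eq_lintegral_Ioi_meas_lt hg hg1]
    _ ≤ ∫⁻ t in Set.Ioi (0 : ℝ), volume {x | ENNReal.ofReal t < min (h x) 1} :=
        setLIntegral_mono' measurableSet_Ioi key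
    _ = ∫⁻ x, min (h x) 1 :=
        (lintegral_eq_lintegral_Ioi_meas_lt (hh.min measurable_const)
          fun x => min_le_right _ _).symm
    _ ≤ _ := lintegral_mono fun x => min_le_left _ _

lemma prekopa_leindler_real_of_bounded {a b : ℝ} (ha : 0 < a) (hb : 0 < b) (hab : a + b = 1)
    {f g h : ℝ → ℝ≥0∞} (hf : Measurable f) (hg : Measurable g) (hh : Measurable h)
    {C : ℝ≥0∞} (hC : C ≠ ∞) (hfC : ∀ x, f x ≤ C) (hgC : ∀ x, g x ≤ C)
    (hfgh : ∀ x y, f x ^ a * g y ^ b ≤ h (a * x + b * y)) :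
    (∫⁻ x, f x) ^ a * (∫⁻ x, g x) ^ b ≤ ∫⁻ x, h x := by
  set p := ⨆ x, f x with hp
  set q := ⨆ x, g x with hq
  have hfp : ∀ x, f x ≤ p := le_iSup f
  have hgq : ∀ x, g x ≤ q := le_iSup g
  have hptop : p ≠ ∞ := ((iSup_le hfC).trans_lt hC.lt_top).ne
  have hqtop : q ≠ ∞ := ((iSup_le hgC).trans_lt hC.lt_top).ne
  by_cases hp0 : p = 0
  · have : ∀ x, f x = 0 := fun x => le_antisymm (hp0 ▸ hfp x) zero_le
    simp [this, ha]
  by_cases hq0 : q = 0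
  · have : ∀ x, g x = 0 := fun x => le_antisymm (hq0 ▸ hgq x) zero_le
    simp [this, hb]
  set r := p ^ a * q ^ b with hr
  have hpa0 : p ^ a ≠ 0 := by simp [hp0, hptop]
  have hpat : p ^ a ≠ ∞ := ENNReal.rpow_ne_top_of_nonneg ha.le hptop
  have hqb0 : q ^ b ≠ 0 := by simp [hq0, hqtop]
  have hqbt : q ^ b ≠ ∞ := ENNReal.rpow_ne_top_of_nonneg hb.le hqtop
  have hr0 : r ≠ 0 := mul_ne_zero hpa0 hqb0
  have hrt : r ≠ ∞ := ENNReal.mul_ne_top hpat hqbt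
  have hdiv : ∀ u v : ℝ≥0∞, (u / p) ^ a * (v / q) ^ b = u ^ a * v ^ b / r := by
    intro u v
    rw [ENNReal.div_rpow_of_nonneg _ _ ha.le, ENNReal.div_rpow_of_nonneg _ _ hb.le, hr,
      div_eq_mul_inv, div_eq_mul_inv, div_eq_mul_inv, ENNReal.mul_inv (Or.inl hpa0) (Or.inl hpat)]
    ring
  have hsup : ∀ (k : ℝ → ℝ≥0∞) (m : ℝ≥0∞), m = ⨆ x, k x → m ≠ 0 → m ≠ ∞ →
      ∀ t < 1, ∃ x, t < k x / m := by
    intro k m hm hm0 hmt t ht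
    have : t * m < ⨆ x, k x := by
      rw [← hm]
      calc t * m < 1 * m := by
            rw [ENNReal.mul_lt_mul_iff_left hm0 hmt]; exact ht
        _ = m := one_mul m
    obtain ⟨x, hx⟩ := lt_iSup_iff.1 this
    exact ⟨x, (ENNReal.lt_div_iff_mul_lt (Or.inl hm0) (Or.inl hmt)).2 hx⟩
  have key := arith_mean_lintegral_le_of_normalized ha hb hab (hf.div_const p) (hg.div_const q)
    (hh.div_const r) (fun x => ENNReal.div_le_of_le_mul (by simpa using hfp x))
    (fun x => ENNReal.div_le_of_le_mul (by simpa using hgq x)) (hsup f p hp hp0 hptop)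
    (hsup g q hq hq0 hqtop) (fun x y => by
      rw [hdiv]; exact ENNReal.div_le_div_right (hfgh x y) r)
  have key2 := (ENNReal.geom_mean_le_arith_mean2 ha hb hab _ _).trans key
  simp only [div_eq_mul_inv] at key2
  rw [lintegral_mul_const _ hf, lintegral_mul_const _ hg, lintegral_mul_const _ hh] at key2
  simp only [← div_eq_mul_inv] at key2
  rw [hdiv, ENNReal.div_le_iff_le_mul (Or.inl hr0) (Or.inl hrt),
    ENNReal.div_mul_cancel hr0 hrt] at key2
  exact key2

lemma lintegral_eq_iSup_lintegral_min {α : Type*} [MeasurableSpace α] {μ : Measure α}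
    {f : α → ℝ≥0∞} (hf : Measurable f) :
    ∫⁻ x, f x ∂μ = ⨆ N : ℕ, ∫⁻ x, min (f x) N ∂μ := by
  rw [← lintegral_iSup (fun N => hf.min measurable_const)
    (fun N M h x => min_le_min_left _ (by exact_mod_cast h))]
  congr with x
  refine le_antisymm (le_of_forall_lt fun c hc => ?_) (iSup_le fun N => min_le_left _ _)
  obtain ⟨N, hN⟩ := ENNReal.exists_nat_gt hc.ne_top
  exact lt_iSup_iff.2 ⟨N, lt_min hc hN⟩

/-- The Prékopa–Leindler inequality on the real line. -/
lemma prekopa_leindler_real {a b : ℝ} (ha : 0 < a) (hb : 0 < b) (hab : a + b = 1)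
    {f g h : ℝ → ℝ≥0∞} (hf : Measurable f) (hg : Measurable g) (hh : Measurable h)
    (hfgh : ∀ x y, f x ^ a * g y ^ b ≤ h (a * x + b * y)) :
    (∫⁻ x, f x) ^ a * (∫⁻ x, g x) ^ b ≤ ∫⁻ x, h x := by
  have e1 := (ENNReal.orderIsoRpow a ha).map_iSup fun N : ℕ => ∫⁻ x, min (f x) N
  have e2 := (ENNReal.orderIsoRpow b hb).map_iSup fun N : ℕ => ∫⁻ x, min (g x) N
  simp only [ENNReal.orderIsoRpow_apply] at e1 e2
  rw [lintegral_eq_iSup_lintegral_min hf, lintegral_eq_iSup_lintegral_min hg, e1, e2,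
    ENNReal.iSup_mul]
  refine iSup_le fun N => ?_
  rw [ENNReal.mul_iSup]
  refine iSup_le fun M => ?_
  refine prekopa_leindler_real_of_bounded ha hb hab (hf.min measurable_const)
    (hg.min measurable_const) hh (C := max (N : ℝ≥0∞) M) (by simp)
    (fun x => (min_le_right _ _).trans (le_max_left _ _))
    (fun x => (min_le_right _ _).trans (le_max_right _ _)) (fun x y => le_trans ?_ (hfgh x y))
  gcongr <;> exact min_le_left _ _

/-- The Prékopa–Leindler inequality on `ℝⁿ`. -/
theorem prekopa_leindler {a b : ℝ} (ha : 0 < a) (hb : 0 < b) (hab : a + b = 1) :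
    ∀ (n : ℕ) {f g h : (Fin n → ℝ) → ℝ≥0∞}, Measurable f → Measurable g → Measurable h →
    (∀ x y, f x ^ a * g y ^ b ≤ h (a • x + b • y)) →
    (∫⁻ x, f x) ^ a * (∫⁻ x, g x) ^ b ≤ ∫⁻ x, h x := by
  intro n
  induction n with
  | zero =>
    intro f g h _ _ _ hfgh
    have hvol : (volume : Measure (Fin 0 → ℝ)) = Measure.dirac 0 := Measure.volume_pi_eq_dirac 0
    simpa [hvol] using hfgh 0 0
  | succ n ih =>
    intro f g h hf hg hh hfgh
    have hcons : Measurable fun p : ℝ × (Fin n → ℝ) => (Fin.cons p.1 p.2 : Fin (n + 1) → ℝ) := by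
      refine measurable_pi_iff.2 fun i => ?_
      refine Fin.cases ?_ (fun j => ?_) i
      · simpa using measurable_fst
      · exact (measurable_pi_apply j).comp measurable_snd
    have hint : ∀ k : (Fin (n + 1) → ℝ) → ℝ≥0∞, Measurable k →
        ∫⁻ x, k x = ∫⁻ t, ∫⁻ x, k (Fin.cons t x) := by
      intro k hk
      have e := (volume_preserving_piFinSuccAbove (fun _ : Fin (n + 1) => ℝ) 0).symm
      rw [← e.lintegral_comp hk, Measure.volume_eq_prod,
        lintegral_prod (fun p => k _) (hk.comp (MeasurableEquiv.measurable _)).aemeasurable]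
      simp [MeasurableEquiv.piFinSuccAbove, Fin.insertNthEquiv]
    rw [hint f hf, hint g hg, hint h hh]
    have hm : ∀ k : (Fin (n + 1) → ℝ) → ℝ≥0∞, Measurable k →
        Measurable fun t : ℝ => ∫⁻ x : Fin n → ℝ, k (Fin.cons t x) :=
      fun k hk => (hk.comp hcons).lintegral_prod_right'
    have hs : ∀ (k : (Fin (n + 1) → ℝ) → ℝ≥0∞) (t : ℝ), Measurable k →
        Measurable fun x : Fin n → ℝ => k (Fin.cons t x) :=
      fun k t hk => (hk.comp hcons).comp measurable_prodMk_left
    refine prekopa_leindler_real ha hb hab (hm f hf) (hm g hg) (hm h hh) fun t s => ?_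
    refine ih (hs f t hf) (hs g s hg) (hs h _ hh) fun x y => ?_
    refine (hfgh _ _).trans (le_of_eq ?_)
    congr 1
    ext i
    refine Fin.cases ?_ (fun j => ?_) i <;> simp

/-- A continuous cumulative distribution function of a compactly supported measure that is
log-concave. -/
structure IsLogConcaveCDF (F : ℝ → ℝ) : Prop where
  continuous : Continuous F
  monotone : Monotone F
  nonneg : ∀ x, 0 ≤ F x
  le_one : ∀ x, F x ≤ 1
  exists_eq_zero : ∃ x, F x = 0
  exists_eq_one : ∃ x, F x = 1
  rpow_mul_rpow_le : ∀ {a b : ℝ}, 0 < a → 0 < b → a + b = 1 →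
    ∀ x y, F x ^ a * F y ^ b ≤ F (a * x + b * y)

namespace IsLogConcaveCDF

variable {F G H : ℝ → ℝ}

lemma le_of_le (hF : IsLogConcaveCDF F) {p q : ℝ} (h0 : 0 < F q) (h1 : F q < 1)
    (hpq : F q ≤ F p) : q ≤ p := by
  by_contra! hlt
  have heq : F p = F q := le_antisymm (hF.monotone hlt.le) hpq
  obtain ⟨z, hz⟩ := hF.exists_eq_one
  have hqz : q < z := by
    by_contra! h
    exact absurd (hF.monotone h) (by rw [hz]; exact not_le.2 h1)
  have hpz : 0 < z - p := by linarith
  have ha : 0 < (z - q) / (z - p) := div_pos (by linarith) hpz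
  have hb : 0 < (q - p) / (z - p) := div_pos (by linarith) hpz
  have hab : (z - q) / (z - p) + (q - p) / (z - p) = 1 := by field_simp; ring
  have h := hF.rpow_mul_rpow_le ha hb hab p z
  have hq : (z - q) / (z - p) * p + (q - p) / (z - p) * z = q := by field_simp; ring
  rw [hq, hz, Real.one_rpow, mul_one, heq] at h
  have h' := Real.rpow_lt_rpow_of_exponent_gt h0 h1 (by linarith : (z - q) / (z - p) < 1)
  rw [Real.rpow_one] at h'
  linarith

lemma exists_quantile (hF : IsLogConcaveCDF F) :
    ∃ X : ℝ → ℝ, ∀ s < 0, F (X s) = Real.exp s := by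
  obtain ⟨x, hx⟩ := hF.exists_eq_zero
  obtain ⟨y, hy⟩ := hF.exists_eq_one
  have : ∀ s : ℝ, ∃ z, s < 0 → F z = Real.exp s := by
    intro s
    by_cases hs : s < 0
    · have hmem : Real.exp s ∈ Set.Icc (F x) (F y) := by
        rw [hx, hy]; exact ⟨(Real.exp_pos s).le, (Real.exp_lt_one_iff.2 hs).le⟩
      obtain ⟨z, hz⟩ := intermediate_value_univ x y hF.continuous hmem
      exact ⟨z, fun _ => hz⟩
    · exact ⟨0, fun h => absurd h hs⟩
  choose X hX using this
  exact ⟨X, hX⟩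

lemma le_of_exp_le (hF : IsLogConcaveCDF F) {p q s : ℝ} (hs : s < 0) (hq : F q = Real.exp s)
    (hp : Real.exp s ≤ F p) : q ≤ p :=
  hF.le_of_le (by rw [hq]; exact Real.exp_pos s) (by rw [hq]; exact Real.exp_lt_one_iff.2 hs)
    (by rwa [hq])

lemma _root_.Real.exp_rpow_mul_exp_rpow (a b s t : ℝ) :
    Real.exp s ^ a * Real.exp t ^ b = Real.exp (a * s + b * t) := by
  rw [← Real.exp_mul, ← Real.exp_mul, ← Real.exp_add]
  ring_nf

lemma convexOn_quantile (hF : IsLogConcaveCDF F) {X : ℝ → ℝ}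
    (hX : ∀ s < 0, F (X s) = Real.exp s) : ConvexOn ℝ (Set.Iio 0) X := by
  refine convexOn_iff_forall_pos.2 ⟨convex_Iio 0, fun s hs t ht a b ha hb hab => ?_⟩
  simp only [smul_eq_mul, Set.mem_Iio] at *
  have hst : a * s + b * t < 0 := by nlinarith
  refine hF.le_of_exp_le hst (hX _ hst) ?_
  have := hF.rpow_mul_rpow_le ha hb hab (X s) (X t)
  rwa [hX s hs, hX t ht, Real.exp_rpow_mul_exp_rpow] at this

end IsLogConcaveCDF

lemma HasDerivWithinAt.nonneg_of_forall_Ioo_le {f : ℝ → ℝ} {c t u : ℝ} (htu : t < u)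
    (hf : HasDerivWithinAt f c (Set.Ioi t) t) (h : ∀ s ∈ Set.Ioo t u, f t ≤ f s) : 0 ≤ c := by
  rw [hasDerivWithinAt_iff_tendsto_slope' (by simp)] at hf
  refine ge_of_tendsto hf ?_
  filter_upwards [Ioo_mem_nhdsGT htu] with s hs
  rw [slope_def_field]
  exact div_nonneg (sub_nonneg.2 (h s hs)) (sub_nonneg.2 hs.1.le)

lemma rightDeriv_le_rightDeriv_of_infConvolution {a b : ℝ} (ha : 0 < a) (hb : 0 < b)
    (hab : a + b = 1) {X Y : ℝ → ℝ} {t p q : ℝ} (ht : t < 0)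
    (hX : HasDerivWithinAt X p (Set.Ioi t) t) (hY : HasDerivWithinAt Y q (Set.Ioi t) t)
    (h : ∀ s < 0, ∀ t < 0, a * X (a * s + b * t) + b * Y (a * s + b * t) ≤ a * X s + b * Y t) :
    q ≤ p := by
  have htt : a * t + b * t = t := by rw [← add_mul, hab, one_mul]
  have hlin : HasDerivWithinAt (fun s => a * s + b * t) a (Set.Ioi t) t := by
    simpa using ((hasDerivWithinAt_id t (Set.Ioi t)).const_mul a).add_const (b * t)
  have hmaps : Set.MapsTo (fun s => a * s + b * t) (Set.Ioi t) (Set.Ioi t) := by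
    intro s hs
    simp only [Set.mem_Ioi] at *
    nlinarith
  have hX' : HasDerivWithinAt (fun s => X (a * s + b * t)) (p * a) (Set.Ioi t) t :=
    HasDerivWithinAt.comp t (h₂ := X) (by rwa [htt]) hlin hmaps
  have hY' : HasDerivWithinAt (fun s => Y (a * s + b * t)) (q * a) (Set.Ioi t) t :=
    HasDerivWithinAt.comp t (h₂ := Y) (by rwa [htt]) hlin hmaps
  have hphi := ((hX.const_mul a).add_const (b * Y t)).sub ((hX'.const_mul a).add (hY'.const_mul b))
  have hnn := hphi.nonneg_of_forall_Ioo_le ht (fun s hs => by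
    have := h s hs.2 t ht
    simp only [Pi.add_apply, Pi.sub_apply, htt]
    linarith)
  have : 0 ≤ a * b * (p - q) := by
    have hb' : b = 1 - a := by linarith
    rw [hb'] at hnn ⊢
    nlinarith
  exact sub_nonneg.1 (nonneg_of_mul_nonneg_right this (mul_pos ha hb))

lemma exists_forall_sub_eq_of_infConvolution {a b : ℝ} (ha : 0 < a) (hb : 0 < b)
    (hab : a + b = 1) {X Y : ℝ → ℝ} (hX : ConvexOn ℝ (Set.Iio 0) X)
    (hY : ConvexOn ℝ (Set.Iio 0) Y)
    (h : ∀ s < 0, ∀ t < 0, a * X (a * s + b * t) + b * Y (a * s + b * t) ≤ a * X s + b * Y t) :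
    ∃ d, ∀ s < 0, Y s = X s + d := by
  have hcont : ContinuousOn (fun s => Y s - X s) (Set.Iio 0) :=
    (hY.continuousOn isOpen_Iio).sub (hX.continuousOn isOpen_Iio)
  have hder : ∀ t < 0, HasDerivWithinAt (fun s => Y s - X s) 0 (Set.Ici t) t := by
    intro t ht
    have hmem : t ∈ interior (Set.Iio (0 : ℝ)) := by simpa using ht
    have h1 := hX.hasDerivWithinAt_rightDeriv_of_mem_interior hmem
    have h2 := hY.hasDerivWithinAt_rightDeriv_of_mem_interior hmem
    have e1 := rightDeriv_le_rightDeriv_of_infConvolution ha hb hab ht h1 h2 h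
    have e2 := rightDeriv_le_rightDeriv_of_infConvolution hb ha (by rwa [add_comm]) ht h2 h1
      (fun s hs u hu => by have := h u hu s hs; rw [add_comm (b * s)]; linarith)
    rw [← hasDerivWithinAt_Ioi_iff_Ici]
    have := h2.sub h1
    rwa [le_antisymm e1 e2, sub_self] at this
  have hle : ∀ s t : ℝ, s ≤ t → t < 0 → Y t - X t = Y s - X s := fun s t hst ht =>
    constant_of_has_deriv_right_zero (hcont.mono fun x hx => lt_of_le_of_lt hx.2 ht)
      (fun x hx => hder x (hx.2.trans ht)) t ⟨hst, le_rfl⟩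
  refine ⟨Y (-1) - X (-1), fun s hs => ?_⟩
  rcases le_total s (-1) with h1 | h1
  · linarith [hle s (-1) h1 (by norm_num)]
  · linarith [hle (-1) s h1 hs]

lemma IsLogConcaveCDF.exists_forall_add_eq {a b : ℝ} (ha : 0 < a) (hb : 0 < b) (hab : a + b = 1)
    {F G H : ℝ → ℝ} (hF : IsLogConcaveCDF F) (hG : IsLogConcaveCDF G) (hH : IsLogConcaveCDF H)
    (h1 : ∀ x y, F x ^ a * G y ^ b ≤ H (a * x + b * y))
    (h2 : ∀ x y, (1 - F x) ^ a * (1 - G y) ^ b ≤ 1 - H (a * x + b * y)) :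
    ∃ d, ∀ s, G (s + d) = F s := by
  obtain ⟨X, hX⟩ := hF.exists_quantile
  obtain ⟨Y, hY⟩ := hG.exists_quantile
  have hm : ∀ s < 0, H (a * X s + b * Y s) = Real.exp s := by
    intro s hs
    have e1 := h1 (X s) (Y s)
    have e2 := h2 (X s) (Y s)
    rw [hX s hs, hY s hs] at e1 e2
    have hpos : 0 < 1 - Real.exp s := by linarith [Real.exp_lt_one_iff.2 hs]
    rw [← Real.rpow_add (Real.exp_pos s), hab, Real.rpow_one] at e1
    rw [← Real.rpow_add hpos, hab, Real.rpow_one] at e2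
    linarith
  obtain ⟨d, hd⟩ := exists_forall_sub_eq_of_infConvolution ha hb hab (hF.convexOn_quantile hX)
    (hG.convexOn_quantile hY) (fun s hs t ht => by
      have hst : a * s + b * t < 0 := by nlinarith
      refine hH.le_of_exp_le hst (hm _ hst) ?_
      have := h1 (X s) (Y t)
      rwa [hX s hs, hY t ht, Real.exp_rpow_mul_exp_rpow] at this)
  refine ⟨d, fun s => le_antisymm ?_ ?_⟩
  · by_contra! hlt
    obtain ⟨u, hu1, hu2⟩ := exists_between hlt
    have hu0 : 0 < u := (hF.nonneg s).trans_lt hu1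
    have hlog : Real.log u < 0 := Real.log_neg hu0 (hu2.trans_le (hG.le_one _))
    have hXu := hX _ hlog
    have hYu := hY _ hlog
    rw [Real.exp_log hu0] at hXu hYu
    have e1 : s < X (Real.log u) := hF.monotone.reflect_lt (by rwa [hXu])
    have e2 : Y (Real.log u) < s + d := hG.monotone.reflect_lt (by rwa [hYu])
    linarith [hd _ hlog]
  · by_contra! hlt
    obtain ⟨u, hu1, hu2⟩ := exists_between hlt
    have hu0 : 0 < u := (hG.nonneg _).trans_lt hu1
    have hlog : Real.log u < 0 := Real.log_neg hu0 (hu2.trans_le (hF.le_one _))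
    have hXu := hX _ hlog
    have hYu := hY _ hlog
    rw [Real.exp_log hu0] at hXu hYu
    have e1 : X (Real.log u) < s := hF.monotone.reflect_lt (by rwa [hXu])
    have e2 : s + d < Y (Real.log u) := hG.monotone.reflect_lt (by rwa [hYu])
    linarith [hd _ hlog]

section ConvexBodies

variable {n : ℕ} {K T : Set (EuclideanSpace ℝ (Fin n))}

/-- The multiplicative Brunn–Minkowski inequality for compact sets. -/
lemma volume_rpow_mul_volume_rpow_le {a b : ℝ} (ha : 0 < a) (hb : 0 < b) (hab : a + b = 1)
    (hK : IsCompact K) (hT : IsCompact T) :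
    volume K ^ a * volume T ^ b ≤ volume (a • K + b • T) := by
  have hm : IsCompact (a • K + b • T) := (hK.smul a).add (hT.smul b)
  have hind : ∀ {S : Set (EuclideanSpace ℝ (Fin n))}, IsCompact S →
      Measurable (S.indicator (1 : EuclideanSpace ℝ (Fin n) → ℝ≥0∞)) :=
    fun hS => measurable_one.indicator hS.measurableSet
  have hint : ∀ {S : Set (EuclideanSpace ℝ (Fin n))}, IsCompact S →
      ∫⁻ x : Fin n → ℝ, S.indicator 1 (WithLp.toLp 2 x) = volume S := by
    intro S hS
    rw [(PiLp.volume_preserving_toLp (Fin n)).lintegral_comp (hind hS),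
      lintegral_indicator_one hS.measurableSet]
  have hmeas : ∀ {S : Set (EuclideanSpace ℝ (Fin n))}, IsCompact S →
      Measurable fun x : Fin n → ℝ => S.indicator (1 : EuclideanSpace ℝ (Fin n) → ℝ≥0∞) (WithLp.toLp 2 x) :=
    fun hS => (hind hS).comp (PiLp.volume_preserving_toLp (Fin n)).measurable
  rw [← hint hK, ← hint hT, ← hint hm]
  refine prekopa_leindler ha hb hab n (hmeas hK) (hmeas hT) (hmeas hm) fun x y => ?_
  by_cases hx : WithLp.toLp 2 x ∈ K
  · by_cases hy : WithLp.toLp 2 y ∈ T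
    · have hxy : a • WithLp.toLp 2 x + b • WithLp.toLp 2 y ∈ a • K + b • T :=
        ⟨_, ⟨_, hx, rfl⟩, _, ⟨_, hy, rfl⟩, rfl⟩
      simp [hx, hy, hxy]
    · simp [hy, hb]
  · simp [hx, ha]

lemma volume_real_rpow_mul_volume_real_rpow_le {a b : ℝ} (ha : 0 < a) (hb : 0 < b)
    (hab : a + b = 1) (hK : IsCompact K) (hT : IsCompact T) :
    volume.real K ^ a * volume.real T ^ b ≤ volume.real (a • K + b • T) := by
  have h := ENNReal.toReal_mono ((hK.smul a).add (hT.smul b)).measure_ne_top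
    (volume_rpow_mul_volume_rpow_le ha hb hab hK hT)
  rwa [ENNReal.toReal_mul, ← ENNReal.toReal_rpow, ← ENNReal.toReal_rpow] at h

lemma volume_real_smul (c : ℝ) (S : Set (EuclideanSpace ℝ (Fin n))) :
    volume.real (c • S) = |c| ^ n * volume.real S := by
  rw [measureReal_def, Measure.addHaar_smul, ENNReal.toReal_mul,
    ENNReal.toReal_ofReal (abs_nonneg _), abs_pow, finrank_euclideanSpace_fin, measureReal_def]

lemma volume_real_vadd (c : EuclideanSpace ℝ (Fin n)) (S : Set (EuclideanSpace ℝ (Fin n))) :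
    volume.real (c +ᵥ S) = volume.real S := by
  rw [measureReal_def, measure_vadd, measureReal_def]

lemma Convex.subset_of_volume_real_le (hK : IsCompact K) (hKconv : Convex ℝ K)
    (hKint : (interior K).Nonempty) (hT : IsClosed T)
    (h : volume.real K ≤ volume.real (K ∩ T)) : K ⊆ T := by
  have h0 : volume.real (K \ T) = 0 := by
    have := measureReal_inter_add_sdiff (μ := volume) (s := K) hT.measurableSet hK.measure_ne_top
    have := measureReal_nonneg (μ := volume) (s := K \ T)
    linarith
  have h0' : volume (K \ T) = 0 := by
    rwa [measureReal_eq_zero_iff (measure_ne_top_of_subset Set.sdiff_subset hK.measure_ne_top)] at h0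
  have hempty : interior K \ T = ∅ := by
    rw [← (isOpen_interior.sdiff hT).measure_eq_zero_iff volume]
    exact measure_mono_null (Set.sdiff_subset_sdiff_left interior_subset) h0'
  have hsub : interior K ⊆ T := Set.sdiff_eq_empty.1 hempty
  calc K ⊆ closure K := subset_closure
    _ = closure (interior K) :=
        (hKconv.closure_interior_eq_closure_of_nonempty_interior hKint).symm
    _ ⊆ T := closure_minimal hsub hT

lemma volume_setOf_apply_eq {φ : EuclideanSpace ℝ (Fin n) →L[ℝ] ℝ} (hφ : φ ≠ 0) (s : ℝ) :
    volume {x | φ x = s} = 0 := by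
  obtain ⟨v, hv⟩ : ∃ v, φ v ≠ 0 := by
    by_contra! h
    exact hφ (ContinuousLinearMap.ext h)
  have hset : {x | φ x = s} =
      (fun x => x + (-(s / φ v) • v)) ⁻¹' (LinearMap.ker φ.toLinearMap : Set _) := by
    ext x
    simp [hv, ← sub_eq_add_neg, sub_eq_zero]
  rw [hset, measure_preimage_add_right]
  refine Measure.addHaar_submodule volume _ fun htop => hv ?_
  have : v ∈ LinearMap.ker φ.toLinearMap := htop ▸ Submodule.mem_top
  simpa using this

lemma continuous_volume_real_inter_halfSpace (hK : IsCompact K)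
    {φ : EuclideanSpace ℝ (Fin n) →L[ℝ] ℝ} (hφ : φ ≠ 0) :
    Continuous fun s : ℝ => volume.real (K ∩ {x | φ x ≤ s}) := by
  have hm : ∀ s : ℝ, MeasurableSet {x | φ x ≤ s} := fun s =>
    (isClosed_le φ.continuous continuous_const).measurableSet
  have heq : (fun s : ℝ => volume.real (K ∩ {x | φ x ≤ s})) =
      fun s => ∫ x in K, {x | φ x ≤ s}.indicator (fun _ => (1 : ℝ)) x := by
    ext s
    rw [integral_indicator_const _ (hm s), measureReal_restrict_apply (hm s), Set.inter_comm]
    simp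
  have : Fact (volume K < ∞) := ⟨hK.measure_lt_top⟩
  rw [heq, continuous_iff_continuousAt]
  intro s
  refine continuousAt_of_dominated (bound := fun _ => 1)
    (Filter.Eventually.of_forall fun t =>
      (measurable_const.indicator (hm t)).aestronglyMeasurable)
    (Filter.Eventually.of_forall fun t => Filter.Eventually.of_forall fun x => ?_)
    (integrable_const _) ?_
  · by_cases hx : φ x ≤ t <;> simp [hx]
  · have hae : ∀ᵐ x ∂(volume.restrict K), φ x ≠ s := ae_restrict_of_ae (by
      rw [ae_iff]; simpa using volume_setOf_apply_eq hφ s)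
    filter_upwards [hae] with x hx
    rcases lt_or_gt_of_ne hx with h | h
    · refine (continuousAt_const (y := (1 : ℝ))).congr ?_
      filter_upwards [lt_mem_nhds h] with t ht
      simp [ht.le]
    · refine (continuousAt_const (y := (0 : ℝ))).congr ?_
      filter_upwards [gt_mem_nhds h] with t ht
      simp [ht]

lemma volume_real_inter_add_inter (hK : IsCompact K) {φ : EuclideanSpace ℝ (Fin n) →L[ℝ] ℝ}
    (hφ : φ ≠ 0) (s : ℝ) :
    volume.real (K ∩ {x | φ x ≤ s}) + volume.real (K ∩ {x | s ≤ φ x}) = volume.real K := by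
  rw [← measureReal_inter_add_sdiff (s := K)
    (isClosed_le φ.continuous (continuous_const (y := s))).measurableSet hK.measure_ne_top]
  congr 1
  refine measureReal_congr ?_
  have hae : ∀ᵐ x, φ x ≠ s := by rw [ae_iff]; simpa using volume_setOf_apply_eq hφ s
  filter_upwards [hae] with x hx
  refine propext (and_congr_right fun _ => ?_)
  change s ≤ φ x ↔ ¬ φ x ≤ s
  rw [not_le, le_iff_lt_or_eq]
  simp [hx.symm]

lemma volume_real_halfSpace_rpow_mul_le {a b : ℝ} (ha : 0 < a) (hb : 0 < b) (hab : a + b = 1)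
    (hK : IsCompact K) (hT : IsCompact T) (φ : EuclideanSpace ℝ (Fin n) →L[ℝ] ℝ) (x y : ℝ) :
    volume.real (K ∩ {z | φ z ≤ x}) ^ a * volume.real (T ∩ {z | φ z ≤ y}) ^ b ≤
      volume.real ((a • K + b • T) ∩ {z | φ z ≤ a * x + b * y}) := by
  have hc : ∀ s : ℝ, IsClosed {z | φ z ≤ s} := fun s => isClosed_le φ.continuous continuous_const
  refine (volume_real_rpow_mul_volume_real_rpow_le ha hb hab (hK.inter_right (hc x))
    (hT.inter_right (hc y))).trans (measureReal_mono ?_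
      (((hK.smul a).add (hT.smul b)).inter_right (hc _)).measure_ne_top)
  rintro _ ⟨_, ⟨u, ⟨hu, hux⟩, rfl⟩, _, ⟨v, ⟨hv, hvy⟩, rfl⟩, rfl⟩
  refine ⟨⟨_, ⟨u, hu, rfl⟩, _, ⟨v, hv, rfl⟩, rfl⟩, ?_⟩
  simp only [Set.mem_ofPred_eq, map_add, map_smul, smul_eq_mul] at *
  gcongr

lemma isLogConcaveCDF_volume_real_inter_halfSpace (hK : IsCompact K) (hKconv : Convex ℝ K)
    (hK1 : volume.real K = 1) {φ : EuclideanSpace ℝ (Fin n) →L[ℝ] ℝ} (hφ : φ ≠ 0) :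
    IsLogConcaveCDF fun s : ℝ => volume.real (K ∩ {x | φ x ≤ s}) where
  continuous := continuous_volume_real_inter_halfSpace hK hφ
  monotone s t hst := measureReal_mono
    (Set.inter_subset_inter_right _ fun x (hx : φ x ≤ s) => hx.trans hst)
    (measure_ne_top_of_subset Set.inter_subset_left hK.measure_ne_top)
  nonneg s := measureReal_nonneg
  le_one s := hK1 ▸ measureReal_mono Set.inter_subset_left hK.measure_ne_top
  exists_eq_zero := by
    obtain ⟨m, hm⟩ := (hK.image φ.continuous).bddBelow
    refine ⟨m - 1, ?_⟩
    convert measureReal_empty (μ := (volume : Measure (EuclideanSpace ℝ (Fin n))))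
    ext x
    simp only [Set.mem_inter_iff, Set.mem_ofPred_eq, Set.mem_empty_iff_false, iff_false, not_and,
      not_le]
    intro hx
    linarith [hm ⟨x, hx, rfl⟩]
  exists_eq_one := by
    obtain ⟨m, hm⟩ := (hK.image φ.continuous).bddAbove
    refine ⟨m, ?_⟩
    rw [← hK1]
    congr 1
    exact Set.inter_eq_left.2 fun x hx => hm ⟨x, hx, rfl⟩
  rpow_mul_rpow_le := by
    intro a b ha hb hab x y
    have hKab : a • K + b • K = K := by
      rw [← hKconv.add_smul ha.le hb.le, hab, one_smul]
    simpa only [hKab] using volume_real_halfSpace_rpow_mul_le ha hb hab hK hK φ x y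

lemma exists_forall_volume_real_inter_halfSpace_eq {a b : ℝ} (ha : 0 < a) (hb : 0 < b)
    (hab : a + b = 1) (hK : IsCompact K) (hKconv : Convex ℝ K) (hT : IsCompact T)
    (hTconv : Convex ℝ T) (hK1 : volume.real K = 1) (hT1 : volume.real T = 1)
    (h1 : volume.real (a • K + b • T) = 1) {φ : EuclideanSpace ℝ (Fin n) →L[ℝ] ℝ}
    (hφ : φ ≠ 0) :
    ∃ d : ℝ, ∀ s, volume.real (T ∩ {x | φ x ≤ s + d}) = volume.real (K ∩ {x | φ x ≤ s}) := by
  have hM : IsCompact (a • K + b • T) := (hK.smul a).add (hT.smul b)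
  refine IsLogConcaveCDF.exists_forall_add_eq ha hb hab
    (isLogConcaveCDF_volume_real_inter_halfSpace hK hKconv hK1 hφ)
    (isLogConcaveCDF_volume_real_inter_halfSpace hT hTconv hT1 hφ)
    (isLogConcaveCDF_volume_real_inter_halfSpace hM ((hKconv.smul a).add (hTconv.smul b)) h1 hφ)
    (volume_real_halfSpace_rpow_mul_le ha hb hab hK hT φ) fun x y => ?_
  have hcompl : ∀ {S : Set (EuclideanSpace ℝ (Fin n))}, IsCompact S → volume.real S = 1 →
      ∀ s, 1 - volume.real (S ∩ {x | φ x ≤ s}) = volume.real (S ∩ {x | (-φ) x ≤ -s}) := by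
    intro S hS hS1 s
    rw [← hS1, ← volume_real_inter_add_inter hS hφ s, add_sub_cancel_left]
    simp
  simp only [hcompl hK hK1, hcompl hT hT1, hcompl hM h1]
  rw [show -(a * x + b * y) = a * -x + b * -y by ring]
  exact volume_real_halfSpace_rpow_mul_le ha hb hab hK hT (-φ) (-x) (-y)

lemma setIntegral_eq_setIntegral_add (hK : IsCompact K) (hT : IsCompact T)
    (hK1 : volume.real K = 1) (φ : EuclideanSpace ℝ (Fin n) →L[ℝ] ℝ) {d : ℝ}
    (h : ∀ s, volume.real (T ∩ {x | φ x ≤ s + d}) = volume.real (K ∩ {x | φ x ≤ s})) :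
    ∫ x in T, φ x = (∫ x in K, φ x) + d := by
  have : Fact (volume K < ∞) := ⟨hK.measure_lt_top⟩
  have : Fact (volume T < ∞) := ⟨hT.measure_lt_top⟩
  have hmK : Measurable fun x => φ x + d := (φ.continuous.add continuous_const).measurable
  have hmT : Measurable φ := φ.continuous.measurable
  have hmap : Measure.map (fun x => φ x + d) (volume.restrict K) =
      Measure.map φ (volume.restrict T) := by
    refine Measure.ext_of_Iic _ _ fun s => ?_
    rw [Measure.map_apply hmK measurableSet_Iic, Measure.map_apply hmT measurableSet_Iic,
      Measure.restrict_apply (hmK measurableSet_Iic),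
      Measure.restrict_apply (hmT measurableSet_Iic), Set.inter_comm, Set.inter_comm _ T]
    rw [← ENNReal.toReal_eq_toReal_iff'
      (measure_ne_top_of_subset Set.inter_subset_left hK.measure_ne_top)
      (measure_ne_top_of_subset Set.inter_subset_left hT.measure_ne_top)]
    have e := h (s - d)
    rw [sub_add_cancel] at e
    simp only [le_sub_iff_add_le] at e
    exact e.symm
  have e1 := integral_map (μ := volume.restrict K) (f := fun y : ℝ => y) hmK.aemeasurable
    measurable_id.aestronglyMeasurable
  have e2 := integral_map (μ := volume.restrict T) (f := fun y : ℝ => y) hmT.aemeasurable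
    measurable_id.aestronglyMeasurable
  rw [← e2, ← hmap, e1, integral_add (φ.continuous.continuousOn.integrableOn_compact hK)
    (integrable_const d), integral_const]
  simp [hK1]

lemma Convex.subset_of_forall_volume_real_inter_halfSpace_eq (hK : IsCompact K)
    (hKconv : Convex ℝ K) (hKint : (interior K).Nonempty) (hT : IsCompact T)
    (hTconv : Convex ℝ T) (hT' : T.Nonempty) (hKT : volume.real K = volume.real T)
    (h : ∀ φ : EuclideanSpace ℝ (Fin n) →L[ℝ] ℝ, φ ≠ 0 → ∀ s,
      volume.real (T ∩ {x | φ x ≤ s}) = volume.real (K ∩ {x | φ x ≤ s})) : K ⊆ T := by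
  intro x hxK
  by_contra hxT
  obtain ⟨φ, u, hu, hux⟩ := geometric_hahn_banach_closed_point hTconv hT.isClosed hxT
  obtain ⟨t, ht⟩ := hT'
  have hφ : φ ≠ 0 := by
    rintro rfl
    exact lt_asymm (hu t ht) hux
  have hTu : T ∩ {x | φ x ≤ u} = T := Set.inter_eq_left.2 fun y hy => (hu y hy).le
  have hsub : K ⊆ {x | φ x ≤ u} :=
    Convex.subset_of_volume_real_le hK hKconv hKint (isClosed_le φ.continuous continuous_const)
      (by rw [← h φ hφ u, hTu, hKT])
  exact not_le.2 hux (hsub hxK)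

/-- Equality case of the Brunn–Minkowski inequality for convex bodies of unit volume. -/
theorem exists_eq_vadd_of_volume_real_eq_one {a b : ℝ} (ha : 0 < a) (hb : 0 < b)
    (hab : a + b = 1) (hK : IsCompact K) (hKconv : Convex ℝ K) (hKint : (interior K).Nonempty)
    (hT : IsCompact T) (hTconv : Convex ℝ T) (hTint : (interior T).Nonempty)
    (hK1 : volume.real K = 1) (hT1 : volume.real T = 1)
    (h1 : volume.real (a • K + b • T) = 1) :
    ∃ c : EuclideanSpace ℝ (Fin n), T = c +ᵥ K := by
  set c := (∫ x in T, x) - ∫ x in K, x with hc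
  have hid : ∀ {S : Set (EuclideanSpace ℝ (Fin n))}, IsCompact S →
      IntegrableOn (fun x => x) S volume :=
    fun hS => continuous_id.continuousOn.integrableOn_compact hS
  have hφc : ∀ φ : EuclideanSpace ℝ (Fin n) →L[ℝ] ℝ, φ ≠ 0 → ∀ s,
      volume.real (T ∩ {x | φ x ≤ s}) = volume.real ((c +ᵥ K) ∩ {x | φ x ≤ s}) := by
    intro φ hφ s
    obtain ⟨d, hd⟩ := exists_forall_volume_real_inter_halfSpace_eq ha hb hab hK hKconv hT hTconv
      hK1 hT1 h1 hφ
    have hint := setIntegral_eq_setIntegral_add hK hT hK1 φ hd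
    rw [φ.integral_comp_comm (φ := fun x => x) (hid hK),
      φ.integral_comp_comm (φ := fun x => x) (hid hT)] at hint
    have hd' : φ c = d := by rw [hc, map_sub, hint]; ring
    have e := hd (s - d)
    rw [sub_add_cancel] at e
    rw [e, ← volume_real_vadd c (K ∩ _), Set.vadd_set_inter]
    congr 2
    ext x
    simp [Set.mem_vadd_set_iff_neg_vadd_mem, hd']
  have hcK : IsCompact (c +ᵥ K) := hK.vadd c
  have hcconv : Convex ℝ (c +ᵥ K) := hKconv.vadd c
  have hcint : (interior (c +ᵥ K)).Nonempty := by
    rw [interior_vadd]; exact hKint.vadd_set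
  have hvol : volume.real T = volume.real (c +ᵥ K) := by rw [volume_real_vadd, hK1, hT1]
  refine ⟨c, Set.Subset.antisymm ?_ ?_⟩
  · exact Convex.subset_of_forall_volume_real_inter_halfSpace_eq hT hTconv hTint hcK hcconv
      (hcint.mono interior_subset) hvol fun φ hφ s => (hφc φ hφ s).symm
  · exact Convex.subset_of_forall_volume_real_inter_halfSpace_eq hcK hcconv hcint hT hTconv
      (hTint.mono interior_subset) hvol.symm hφc

end ConvexBodies

section AdditiveBrunnMinkowski

variable {n : ℕ} {K T : Set (EuclideanSpace ℝ (Fin n))}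

lemma volume_real_pos_of_interior_nonempty (hK : IsCompact K) (hKint : (interior K).Nonempty) :
    0 < volume.real K :=
  ENNReal.toReal_pos (Measure.measure_pos_of_nonempty_interior _ hKint).ne' hK.measure_ne_top

lemma volume_real_inv_smul_eq_one {k : ℝ} (hk : 0 < k) (hKk : volume.real K = k ^ n) :
    volume.real (k⁻¹ • K) = 1 := by
  rw [volume_real_smul, hKk, abs_of_pos (inv_pos.2 hk), ← mul_pow, inv_mul_cancel₀ hk.ne', one_pow]

lemma inv_add_smul_add_eq {k t : ℝ} (hk : 0 < k) (ht : 0 < t) :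
    (k / (k + t)) • (k⁻¹ • K) + (t / (k + t)) • (t⁻¹ • T) = (k + t)⁻¹ • (K + T) := by
  have h1 : k / (k + t) * k⁻¹ = (k + t)⁻¹ := by field_simp
  have h2 : t / (k + t) * t⁻¹ = (k + t)⁻¹ := by field_simp
  rw [smul_smul, smul_smul, h1, h2, smul_add]

/-- The additive Brunn–Minkowski inequality for compact sets. -/
theorem add_pow_le_volume_real_add {k t : ℝ} (hk : 0 < k) (ht : 0 < t) (hK : IsCompact K)
    (hT : IsCompact T) (hKk : volume.real K = k ^ n) (hTt : volume.real T = t ^ n) :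
    (k + t) ^ n ≤ volume.real (K + T) := by
  have hkt : 0 < k + t := add_pos hk ht
  have h := volume_real_rpow_mul_volume_real_rpow_le (div_pos hk hkt) (div_pos ht hkt)
    (by field_simp) (hK.smul k⁻¹) (hT.smul t⁻¹)
  rw [inv_add_smul_add_eq hk ht, volume_real_inv_smul_eq_one hk hKk,
    volume_real_inv_smul_eq_one ht hTt, Real.one_rpow, Real.one_rpow, mul_one, volume_real_smul,
    abs_of_pos (inv_pos.2 hkt), inv_pow, inv_mul_eq_div, le_div_iff₀ (by positivity), one_mul] at h
  exact h

/-- Equality case of the additive Brunn–Minkowski inequality for convex bodies. -/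
theorem exists_eq_vadd_smul_of_volume_real_add_eq {k t : ℝ} (hk : 0 < k) (ht : 0 < t)
    (hK : IsCompact K) (hKconv : Convex ℝ K) (hKint : (interior K).Nonempty)
    (hT : IsCompact T) (hTconv : Convex ℝ T) (hTint : (interior T).Nonempty)
    (hKk : volume.real K = k ^ n) (hTt : volume.real T = t ^ n)
    (h : volume.real (K + T) = (k + t) ^ n) :
    ∃ c : EuclideanSpace ℝ (Fin n), T = c +ᵥ (t / k) • K := by
  have hkt : 0 < k + t := add_pos hk ht
  have hint : ∀ {S : Set (EuclideanSpace ℝ (Fin n))} {r : ℝ}, 0 < r → (interior S).Nonempty →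
      (interior (r⁻¹ • S)).Nonempty := by
    intro S r hr hS
    rw [interior_smul₀ (inv_ne_zero hr.ne')]
    exact hS.smul_set
  obtain ⟨c, hc⟩ := exists_eq_vadd_of_volume_real_eq_one (div_pos hk hkt) (div_pos ht hkt)
    (by field_simp) (hK.smul k⁻¹) (hKconv.smul k⁻¹) (hint hk hKint) (hT.smul t⁻¹)
    (hTconv.smul t⁻¹) (hint ht hTint) (volume_real_inv_smul_eq_one hk hKk)
    (volume_real_inv_smul_eq_one ht hTt)
    (by rw [inv_add_smul_add_eq hk ht]; exact volume_real_inv_smul_eq_one hkt h)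
  refine ⟨t • c, ?_⟩
  have := congrArg (fun S => t • S) hc
  simp only [smul_inv_smul₀ ht.ne'] at this
  rw [this, ← Set.singleton_vadd, vadd_eq_add, smul_add, Set.smul_set_singleton, smul_smul,
    ← div_eq_mul_inv, ← vadd_eq_add, Set.singleton_vadd]

end AdditiveBrunnMinkowski

section Frontier

variable {E : Type*} [NormedAddCommGroup E] [NormedSpace ℝ E] {K L : Set E}

lemma Convex.isPreconnected_frontier (hE : 1 < Module.rank ℝ E) (hK : Bornology.IsBounded K)
    (hKconv : Convex ℝ K) (hKint : (interior K).Nonempty) : IsPreconnected (frontier K) := by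
  obtain ⟨h, -, -, hfr⟩ :=
    exists_homeomorph_image_interior_closure_frontier_eq_unitBall hKconv hKint hK
  have : frontier K = h.symm '' Metric.sphere 0 1 := by
    rw [← hfr, Set.image_image]
    simp
  rw [this]
  exact (isPreconnected_sphere hE 0 1).image _ h.symm.continuous.continuousOn

lemma Convex.subset_interior_of_frontier_subset_interior (hK : IsCompact K) (hL : Convex ℝ L)
    (hLint : (interior L).Nonempty) (h : frontier K ⊆ interior L) : K ⊆ interior L := by
  intro x hx
  by_contra hxL
  obtain ⟨f, hf⟩ := geometric_hahn_banach_open_point hL.interior isOpen_interior hxL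
  obtain ⟨m, hmK, hm⟩ := hK.exists_isMaxOn ⟨x, hx⟩ f.continuous.continuousOn
  have hmfr : m ∈ frontier K := by
    rw [hK.isClosed.frontier_eq]
    refine ⟨hmK, fun hmint => ?_⟩
    have hf0 : f = 0 :=
      (hm.isLocalMax (mem_interior_iff_mem_nhds.1 hmint)).hasFDerivAt_eq_zero f.hasFDerivAt
    obtain ⟨y, hy⟩ := hLint
    simpa [hf0] using hf y hy
  exact not_le.2 (hf m (h hmfr)) (hm hx)

lemma Convex.frontier_subset_interior_or_disjoint (hE : 1 < Module.rank ℝ E)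
    (hK : IsCompact K) (hKconv : Convex ℝ K) (hKint : (interior K).Nonempty) (hL : IsClosed L)
    (hdisj : Disjoint (frontier K) (frontier L)) :
    frontier K ⊆ interior L ∨ Disjoint (frontier K) L := by
  rw [← Set.subset_compl_iff_disjoint_right]
  refine (hKconv.isPreconnected_frontier hE hK.isBounded hKint).subset_or_subset isOpen_interior
    hL.isOpen_compl ?_ ?_
  · exact Set.disjoint_left.2 fun x hx hx' => hx' (interior_subset hx)
  · intro x hx
    by_cases hxL : x ∈ L
    · left
      by_contra hxi
      refine Set.disjoint_left.1 hdisj hx ?_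
      rw [hL.frontier_eq]
      exact ⟨hxL, hxi⟩
    · exact Or.inr hxL

lemma IsCompact.not_isOpen_of_nonempty [Nontrivial E] (hK : IsCompact K) (hK' : K.Nonempty) :
    ¬ IsOpen K := by
  intro ho
  have : NoncompactSpace E := NormedSpace.noncompactSpace ℝ E
  rcases isClopen_iff.1 ⟨hK.isClosed, ho⟩ with h | h
  · exact hK'.ne_empty h
  · exact noncompact_univ E (h ▸ hK)

/-- Two intersecting convex bodies with disjoint boundaries are nested. -/
lemma Convex.subset_interior_or_subset_interior (hE : 1 < Module.rank ℝ E) (hK : IsCompact K)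
    (hKconv : Convex ℝ K) (hKint : (interior K).Nonempty) (hL : IsCompact L)
    (hLconv : Convex ℝ L) (hLint : (interior L).Nonempty) (hKL : (K ∩ L).Nonempty)
    (hdisj : Disjoint (frontier K) (frontier L)) : L ⊆ interior K ∨ K ⊆ interior L := by
  rcases hKconv.frontier_subset_interior_or_disjoint hE hK hKint hL.isClosed hdisj with h1 | h1
  · exact Or.inr (Convex.subset_interior_of_frontier_subset_interior hK hLconv hLint h1)
  rcases hLconv.frontier_subset_interior_or_disjoint hE hL hLint hK.isClosed hdisj.symm
    with h2 | h2
  · exact Or.inl (Convex.subset_interior_of_frontier_subset_interior hL hKconv hKint h2)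
  have : Nontrivial E := by
    have h0 : 0 < Module.rank ℝ E := zero_lt_one.trans hE
    exact rank_pos_iff_nontrivial.1 h0
  refine absurd ?_ ((hK.inter hL).not_isOpen_of_nonempty hKL)
  have : K ∩ L = interior K ∩ interior L := by
    refine Set.Subset.antisymm (fun x hx => ?_) (Set.inter_subset_inter interior_subset
      interior_subset)
    rw [hK.isClosed.frontier_eq] at h1
    rw [hL.isClosed.frontier_eq] at h2
    constructor
    · by_contra h
      exact Set.disjoint_left.1 h1 ⟨hx.1, h⟩ hx.2
    · by_contra h
      exact Set.disjoint_left.1 h2 ⟨hx.2, h⟩ hx.1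
  rw [this]
  exact isOpen_interior.inter isOpen_interior

end Frontier

section BoundarySum

variable {n : ℕ} {K T : Set (EuclideanSpace ℝ (Fin n))}

lemma add_subset_frontier_add_union (hn : 2 ≤ n) (hK : IsCompact K) (hKconv : Convex ℝ K)
    (hKint : (interior K).Nonempty) (hT : IsCompact T) (hTconv : Convex ℝ T)
    (hTint : (interior T).Nonempty) (hle : volume.real T ≤ volume.real K) :
    K + T ⊆ (frontier K + frontier T) ∪ {z | ∀ t ∈ T, z - t ∈ K} := by
  have hfin : 1 < Module.finrank ℝ (EuclideanSpace ℝ (Fin n)) := by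
    rw [finrank_euclideanSpace_fin]; omega
  have hE : 1 < Module.rank ℝ (EuclideanSpace ℝ (Fin n)) := by
    rw [← Module.finrank_eq_rank]; exact_mod_cast hfin
  have : Nontrivial (EuclideanSpace ℝ (Fin n)) :=
    Module.nontrivial_of_finrank_pos (R := ℝ) (zero_lt_one.trans hfin)
  rintro _ ⟨x, hx, y, hy, rfl⟩
  by_contra hcon
  simp only [Set.mem_union, not_or] at hcon
  obtain ⟨hfr, hD⟩ := hcon
  set z := x + y with hz
  set e := Homeomorph.subLeft z
  set L := e '' T with hLdef
  have he : ∀ t, e t = z - t := fun t => rfl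
  have hLeq : L = z +ᵥ -T := by
    ext u
    simp only [hLdef, Set.mem_image, he, Set.mem_vadd_set_iff_neg_vadd_mem, vadd_eq_add,
      Set.mem_neg, neg_add_rev, neg_neg]
    exact ⟨by rintro ⟨t, ht, rfl⟩; simpa using ht, fun h => ⟨_, h, by abel⟩⟩
  have hL : IsCompact L := hT.image e.continuous
  have hLconv : Convex ℝ L := by rw [hLeq]; exact hTconv.neg.vadd z
  have hLint : (interior L).Nonempty := by
    rw [hLdef, ← e.image_interior]; exact hTint.image e
  have hLvol : volume.real L = volume.real T := by
    rw [hLeq, volume_real_vadd, measureReal_def, Measure.measure_neg, measureReal_def]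
  have hdisj : Disjoint (frontier K) (frontier L) := by
    rw [hLdef, ← e.image_frontier, Set.disjoint_left]
    rintro u hu ⟨t, ht, rfl⟩
    exact hfr ⟨_, hu, t, ht, by simp [he]⟩
  have hKL : (K ∩ L).Nonempty := ⟨x, hx, y, hy, by simp [he, hz]⟩
  rcases Convex.subset_interior_or_subset_interior hE hK hKconv hKint hL hLconv hLint hKL hdisj
    with h | h
  · exact hD fun t ht => interior_subset (h ⟨t, ht, rfl⟩)
  · have hKL' : K ⊆ L := h.trans interior_subset
    have hLK : L ⊆ K := Convex.subset_of_volume_real_le hL hLconv hLint hK.isClosed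
      (by rw [Set.inter_eq_right.2 hKL', hLvol]; exact hle)
    have hop : K = interior L := Set.Subset.antisymm h (interior_subset.trans hLK)
    exact hK.not_isOpen_of_nonempty ⟨x, hx⟩ (hop ▸ isOpen_interior)

lemma isCompact_setOf_forall_sub_mem (hK : IsCompact K) (hT : T.Nonempty) :
    IsCompact {z | ∀ t ∈ T, z - t ∈ K} := by
  obtain ⟨t₀, ht₀⟩ := hT
  refine (hK.add (isCompact_singleton (x := t₀))).of_isClosed_subset ?_ fun z hz =>
    ⟨z - t₀, hz t₀ ht₀, t₀, rfl, by simp⟩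
  simp only [Set.ofPred_forall]
  exact isClosed_biInter fun t _ => hK.isClosed.preimage (by fun_prop)

lemma convex_setOf_forall_sub_mem (hK : Convex ℝ K) : Convex ℝ {z | ∀ t ∈ T, z - t ∈ K} := by
  intro x hx y hy a b ha hb hab t ht
  have e : a • x + b • y - t = a • (x - t) + b • (y - t) := by
    have : t = (a + b) • t := by rw [hab, one_smul]
    nth_rewrite 1 [this]
    module
  rw [e]
  exact hK (hx t ht) (hy t ht) ha hb hab

lemma setOf_forall_sub_mem_add_neg_subset : {z | ∀ t ∈ T, z - t ∈ K} + -T ⊆ K := by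
  rintro _ ⟨z, hz, t, ht, rfl⟩
  simpa using hz _ ht

end BoundarySum

section Numerics

lemma pow_add_pow_le_pow_of_sq_add_sq_eq {p q s : ℝ} {n : ℕ} (hn : 2 ≤ n) (hp : 0 ≤ p)
    (hq : 0 ≤ q) (hs : 0 ≤ s) (h : p ^ 2 + q ^ 2 = s ^ 2) : p ^ n + q ^ n ≤ s ^ n := by
  obtain ⟨m, rfl⟩ := Nat.exists_eq_add_of_le hn
  have h1 : p ^ m ≤ s ^ m := pow_le_pow_left₀ hp (by nlinarith [sq_nonneg q]) m
  have h2 : q ^ m ≤ s ^ m := pow_le_pow_left₀ hq (by nlinarith [sq_nonneg p]) m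
  rw [pow_add, pow_add, pow_add, ← h, add_mul]
  gcongr

lemma eq_two_or_eq_zero_of_pow_add_pow_eq {p q s : ℝ} {n : ℕ} (hn : 2 ≤ n) (hp : 0 < p)
    (hq : 0 ≤ q) (hs : 0 ≤ s) (h : p ^ 2 + q ^ 2 = s ^ 2) (hpow : p ^ n + q ^ n = s ^ n) :
    n = 2 ∨ q = 0 := by
  by_contra! hcon
  obtain ⟨m, rfl⟩ := Nat.exists_eq_add_of_le hn
  have hm : m ≠ 0 := by omega
  have hq' : 0 < q := hq.lt_of_ne' hcon.2
  have h1 : p ^ m ≤ s ^ m := pow_le_pow_left₀ hp.le (by nlinarith [sq_nonneg q]) m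
  have h2 : q ^ m < s ^ m := pow_lt_pow_left₀ (by nlinarith [pow_pos hp 2]) hq hm
  rw [pow_add, pow_add, pow_add, ← h, add_mul] at hpow
  nlinarith [mul_le_mul_of_nonneg_left h1 (sq_nonneg p),
    mul_lt_mul_of_pos_left h2 (pow_pos hq' 2)]

lemma sq_two_mul_sqrt_add_sq_sub {k t : ℝ} (hk : 0 ≤ k) (ht : 0 ≤ t) :
    (2 * √(k * t)) ^ 2 + (k - t) ^ 2 = (k + t) ^ 2 := by
  rw [mul_pow, Real.sq_sqrt (mul_nonneg hk ht)]
  ring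

lemma two_pow_mul_sqrt_pow_mul_pow {k t : ℝ} (hk : 0 ≤ k) (ht : 0 ≤ t) (n : ℕ) :
    2 ^ n * √(k ^ n * t ^ n) = (2 * √(k * t)) ^ n := by
  have h : √((k * t) ^ n) = √(k * t) ^ n := by
    rw [Real.sqrt_eq_iff_mul_self_eq (by positivity) (by positivity), ← mul_pow,
      Real.mul_self_sqrt (mul_nonneg hk ht)]
  rw [mul_pow, ← mul_pow k t, h]

end Numerics

section Main

variable {n : ℕ} {K T : Set (EuclideanSpace ℝ (Fin n))}

lemma mem_vadd_smul_iff {r : ℝ} (hr : r ≠ 0) {c x : EuclideanSpace ℝ (Fin n)} :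
    x ∈ c +ᵥ r • K ↔ r⁻¹ • (x - c) ∈ K := by
  rw [Set.mem_vadd_set_iff_neg_vadd_mem, Set.mem_smul_set_iff_inv_smul_mem₀ hr, vadd_eq_add,
    neg_add_eq_sub]

lemma exists_pos_pow_eq {v : ℝ} (hv : 0 < v) {n : ℕ} (hn : n ≠ 0) : ∃ r : ℝ, 0 < r ∧ v = r ^ n :=
  ⟨v ^ (n⁻¹ : ℝ), by positivity, (Real.rpow_inv_natCast_pow hv.le hn).symm⟩

lemma volume_real_neg (S : Set (EuclideanSpace ℝ (Fin n))) : volume.real (-S) = volume.real S := by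
  rw [measureReal_def, Measure.measure_neg, measureReal_def]

lemma volume_real_setOf_forall_sub_mem_le (hn : n ≠ 0) {k t : ℝ} (ht : 0 < t) (htk : t ≤ k)
    (hK : IsCompact K) (hT : IsCompact T) (hTne : T.Nonempty) (hKk : volume.real K = k ^ n)
    (hTt : volume.real T = t ^ n) : volume.real {z | ∀ t ∈ T, z - t ∈ K} ≤ (k - t) ^ n := by
  rcases (measureReal_nonneg (μ := volume) (s := {z | ∀ t ∈ T, z - t ∈ K})).eq_or_lt with h0 | h0
  · rw [← h0]
    exact pow_nonneg (sub_nonneg.2 htk) n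
  obtain ⟨d, hd, hDd⟩ := exists_pos_pow_eq h0 hn
  have h1 := add_pow_le_volume_real_add hd ht (isCompact_setOf_forall_sub_mem hK hTne) hT.neg hDd
    ((volume_real_neg T).trans hTt)
  have h2 := h1.trans (measureReal_mono setOf_forall_sub_mem_add_neg_subset hK.measure_ne_top)
  rw [hKk, pow_le_pow_iff_left₀ (by positivity) (by linarith) hn] at h2
  rw [hDd]
  exact pow_le_pow_left₀ hd.le (by linarith) n

lemma isCompact_frontier_add_frontier (hK : IsCompact K) (hT : IsCompact T) :
    IsCompact (frontier K + frontier T) :=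
  (hK.of_isClosed_subset isClosed_frontier hK.isClosed.frontier_subset).add
    (hT.of_isClosed_subset isClosed_frontier hT.isClosed.frontier_subset)

lemma volume_real_add_le (hn : 2 ≤ n) (hK : IsCompact K) (hKconv : Convex ℝ K)
    (hKint : (interior K).Nonempty) (hT : IsCompact T) (hTconv : Convex ℝ T)
    (hTint : (interior T).Nonempty) (hle : volume.real T ≤ volume.real K) :
    volume.real (K + T) ≤
      volume.real (frontier K + frontier T) + volume.real {z | ∀ t ∈ T, z - t ∈ K} := by
  have hN := isCompact_frontier_add_frontier hK hT
  have hD := isCompact_setOf_forall_sub_mem hK (hTint.mono interior_subset)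
  exact (measureReal_mono (add_subset_frontier_add_union hn hK hKconv hKint hT hTconv hTint hle)
    (hN.union hD).measure_ne_top).trans (measureReal_union_le _ _)

lemma two_pow_mul_sqrt_le_of_volume_le (hn : 2 ≤ n) (hK : IsCompact K) (hKconv : Convex ℝ K)
    (hKint : (interior K).Nonempty) (hT : IsCompact T) (hTconv : Convex ℝ T)
    (hTint : (interior T).Nonempty) (hle : volume.real T ≤ volume.real K) :
    2 ^ n * √(volume.real K * volume.real T) ≤ volume.real (frontier K + frontier T) := by
  have hn0 : n ≠ 0 := by omega
  obtain ⟨k, hk, hKk⟩ := exists_pos_pow_eq (volume_real_pos_of_interior_nonempty hK hKint) hn0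
  obtain ⟨t, ht, hTt⟩ := exists_pos_pow_eq (volume_real_pos_of_interior_nonempty hT hTint) hn0
  have htk : t ≤ k := (pow_le_pow_iff_left₀ ht.le hk.le hn0).1 (hTt ▸ hKk ▸ hle)
  have h1 := volume_real_add_le hn hK hKconv hKint hT hTconv hTint hle
  have h2 := add_pow_le_volume_real_add hk ht hK hT hKk hTt
  have h3 := volume_real_setOf_forall_sub_mem_le hn0 ht htk hK hT (hTint.mono interior_subset)
    hKk hTt
  have h4 := pow_add_pow_le_pow_of_sq_add_sq_eq hn (by positivity) (sub_nonneg.2 htk)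
    (by positivity) (sq_two_mul_sqrt_add_sq_sub hk.le ht.le)
  rw [hKk, hTt, two_pow_mul_sqrt_pow_mul_pow hk.le ht.le]
  linarith

theorem two_pow_mul_sqrt_le (hn : 2 ≤ n) (hK : IsCompact K) (hKconv : Convex ℝ K)
    (hKint : (interior K).Nonempty) (hT : IsCompact T) (hTconv : Convex ℝ T)
    (hTint : (interior T).Nonempty) :
    2 ^ n * √(volume.real K * volume.real T) ≤ volume.real (frontier K + frontier T) := by
  rcases le_total (volume.real T) (volume.real K) with h | h
  · exact two_pow_mul_sqrt_le_of_volume_le hn hK hKconv hKint hT hTconv hTint h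
  · rw [mul_comm (volume.real K), add_comm (frontier K)]
    exact two_pow_mul_sqrt_le_of_volume_le hn hT hTconv hTint hK hKconv hKint h

lemma equality_cases_of_volume_le (hn : 2 ≤ n) (hK : IsCompact K) (hKconv : Convex ℝ K)
    (hKint : (interior K).Nonempty) (hT : IsCompact T) (hTconv : Convex ℝ T)
    (hTint : (interior T).Nonempty) (hle : volume.real T ≤ volume.real K)
    (heq : volume.real (frontier K + frontier T) = 2 ^ n * √(volume.real K * volume.real T)) :
    (∃ x : EuclideanSpace ℝ (Fin n), T = x +ᵥ K) ∨
      (n = 2 ∧ (∃ x : EuclideanSpace ℝ (Fin n), ∃ r : ℝ, 0 < r ∧ T = x +ᵥ r • K) ∧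
        (∃ y : EuclideanSpace ℝ (Fin n), -K = y +ᵥ K)) := by
  have hn0 : n ≠ 0 := by omega
  obtain ⟨k, hk, hKk⟩ := exists_pos_pow_eq (volume_real_pos_of_interior_nonempty hK hKint) hn0
  obtain ⟨t, ht, hTt⟩ := exists_pos_pow_eq (volume_real_pos_of_interior_nonempty hT hTint) hn0
  have htk : t ≤ k := (pow_le_pow_iff_left₀ ht.le hk.le hn0).1 (hTt ▸ hKk ▸ hle)
  have h1 := volume_real_add_le hn hK hKconv hKint hT hTconv hTint hle
  have h2 := add_pow_le_volume_real_add hk ht hK hT hKk hTt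
  have h3 := volume_real_setOf_forall_sub_mem_le hn0 ht htk hK hT (hTint.mono interior_subset)
    hKk hTt
  have hsq := sq_two_mul_sqrt_add_sq_sub hk.le ht.le
  have h4 := pow_add_pow_le_pow_of_sq_add_sq_eq hn (by positivity) (sub_nonneg.2 htk)
    (by positivity) hsq
  rw [heq, hKk, hTt, two_pow_mul_sqrt_pow_mul_pow hk.le ht.le] at h1
  obtain ⟨c, hc⟩ := exists_eq_vadd_smul_of_volume_real_add_eq hk ht hK hKconv hKint hT hTconv
    hTint hKk hTt (by linarith)
  rcases htk.eq_or_lt with rfl | hlt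
  · left
    exact ⟨c, by rwa [div_self hk.ne', one_smul] at hc⟩
  have hkt : 0 < k - t := sub_pos.2 hlt
  have hn2 : n = 2 := (eq_two_or_eq_zero_of_pow_add_pow_eq hn (by positivity) hkt.le
    (by positivity) hsq (by linarith)).resolve_right hkt.ne'
  refine Or.inr ⟨hn2, ⟨c, t / k, by positivity, hc⟩, ?_⟩
  set D := {z | ∀ t ∈ T, z - t ∈ K} with hDdef
  have hDcpt : IsCompact D := isCompact_setOf_forall_sub_mem hK (hTint.mono interior_subset)
  have hDconv : Convex ℝ D := convex_setOf_forall_sub_mem hKconv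
  have hDd : volume.real D = (k - t) ^ n := by linarith
  have hDint : (interior D).Nonempty := by
    by_contra h
    rw [Set.not_nonempty_iff_eq_empty] at h
    have hfr : frontier D = D := by rw [hDcpt.isClosed.frontier_eq, h, Set.sdiff_empty]
    have h0 := hDconv.addHaar_frontier volume
    rw [hfr] at h0
    have : (0 : ℝ) = (k - t) ^ n := by rw [← hDd, measureReal_def, h0, ENNReal.toReal_zero]
    exact (pow_pos hkt n).ne this
  have hTneg : (interior (-T)).Nonempty := by
    rw [← Set.image_neg_eq_neg]
    exact (Homeomorph.neg (EuclideanSpace ℝ (Fin n))).image_interior T ▸ hTint.image _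
  have hTnegt : volume.real (-T) = t ^ n := (volume_real_neg T).trans hTt
  have hsub : D + -T ⊆ K := setOf_forall_sub_mem_add_neg_subset
  have hcpt : IsCompact (D + -T) := hDcpt.add hT.neg
  have hBM := add_pow_le_volume_real_add hkt ht hDcpt hT.neg hDd hTnegt
  rw [sub_add_cancel, ← hKk] at hBM
  have hDK : D + -T = K := hsub.antisymm (Convex.subset_of_volume_real_le hK hKconv hKint
    hcpt.isClosed (by rwa [Set.inter_eq_right.2 hsub]))
  obtain ⟨e, he⟩ := exists_eq_vadd_smul_of_volume_real_add_eq hkt ht hDcpt hDconv hDint hT.neg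
    hTconv.neg hTneg hDd hTnegt (by rw [hDK, hKk, sub_add_cancel])
  set q := t / (k - t) with hq
  have hq0 : 0 < q := by positivity
  have hDe : D = (-q⁻¹ • e) +ᵥ q⁻¹ • -T := by
    rw [he]
    ext x
    rw [mem_vadd_smul_iff (inv_ne_zero hq0.ne'), mem_vadd_smul_iff hq0.ne', inv_inv, neg_smul,
      sub_neg_eq_add, smul_add, smul_inv_smul₀ hq0.ne', add_sub_cancel_right,
      inv_smul_smul₀ hq0.ne']
  have hKT : K = (-q⁻¹ • e) +ᵥ (k / t) • -T := by
    have hs : k / t = q⁻¹ + 1 := by rw [hq]; field_simp; ring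
    rw [hs, hTconv.neg.add_smul (inv_pos.2 hq0).le zero_le_one, one_smul, ← vadd_add_assoc, ← hDe,
      hDK]
  refine ⟨(k / t) • c + q⁻¹ • e, ?_⟩
  ext x
  have h5 : -x ∈ K ↔ (k / t)⁻¹ • (-x - -q⁻¹ • e) ∈ -T := by
    conv_lhs => rw [hKT]
    exact mem_vadd_smul_iff (by positivity)
  rw [Set.mem_neg, h5, Set.mem_neg, hc, mem_vadd_smul_iff (by positivity),
    Set.mem_vadd_set_iff_neg_vadd_mem, vadd_eq_add]
  have h6 : (t / k)⁻¹ • (-((k / t)⁻¹ • (-x - -q⁻¹ • e)) - c) =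
      -((k / t) • c + q⁻¹ • e) + x := by
    rw [inv_div, inv_div, smul_sub, smul_neg, smul_smul, div_mul_div_cancel₀ ht.ne',
      div_self hk.ne']
    module
  rw [h6]

lemma volume_real_frontier_add_le_of_eq_vadd (hK : IsCompact K) (hKconv : Convex ℝ K)
    (x : EuclideanSpace ℝ (Fin n)) (hTK : T = x +ᵥ K) :
    volume.real (frontier K + frontier T) ≤ 2 ^ n * √(volume.real K * volume.real T) := by
  have hT : IsCompact T := hTK ▸ hK.vadd x
  have h1 : K + T = x +ᵥ (1 + 1 : ℝ) • K := by
    rw [hKconv.add_smul zero_le_one zero_le_one, one_smul, ← vadd_add_assoc, ← hTK, add_comm]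
  calc volume.real (frontier K + frontier T) ≤ volume.real (K + T) :=
        measureReal_mono (Set.add_subset_add hK.isClosed.frontier_subset
          hT.isClosed.frontier_subset) (hK.add hT).measure_ne_top
    _ = 2 ^ n * volume.real K := by
        rw [h1, volume_real_vadd, volume_real_smul, one_add_one_eq_two, abs_two]
    _ = 2 ^ n * √(volume.real K * volume.real T) := by
        rw [hTK, volume_real_vadd, Real.sqrt_mul_self measureReal_nonneg]

lemma volume_real_frontier_add_le_of_homothetic {r : ℝ} (hr : 0 < r) (hr1 : r < 1)
    (hK : IsCompact K) (hKconv : Convex ℝ K) (hKint : (interior K).Nonempty)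
    {x y : EuclideanSpace ℝ (Fin n)} (hTK : T = x +ᵥ r • K) (hy : -K = y +ᵥ K) :
    volume.real (frontier K + frontier T) ≤ ((1 + r) ^ n - (1 - r) ^ n) * volume.real K := by
  have hT : IsCompact T := hTK ▸ (hK.smul r).vadd x
  obtain ⟨u₀, hu₀⟩ := hKint.mono interior_subset
  set A := (x - r • y) +ᵥ (1 - r) • interior K with hA
  have hAopen : IsOpen A := (isOpen_interior.smul₀ (sub_pos.2 hr1).ne').vadd _
  have hAvol : volume.real A = (1 - r) ^ n * volume.real K := by
    rw [hA, volume_real_vadd, volume_real_smul, abs_of_pos (sub_pos.2 hr1), measureReal_def,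
      measure_congr (interior_ae_eq_of_null_frontier (hKconv.addHaar_frontier volume)),
      measureReal_def]
  have hsum : K + T = x +ᵥ (1 + r) • K := by
    rw [hKconv.add_smul zero_le_one hr.le, one_smul, add_comm K, add_comm K, ← vadd_add_assoc,
      ← hTK]
  have hmem : ∀ z ∈ A, ∀ t ∈ T, z - t ∈ interior K := by
    rintro z hz t ht
    rw [hTK] at ht
    obtain ⟨_, ⟨i, hi, rfl⟩, rfl⟩ := hz
    obtain ⟨_, ⟨u, hu, rfl⟩, rfl⟩ := ht
    obtain ⟨u', hu', hu''⟩ : -u ∈ y +ᵥ K := hy ▸ Set.neg_mem_neg.2 hu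
    have hu3 : u = -(y + u') :=
      neg_eq_iff_eq_neg.1 hu''.symm
    have e : ((x - r • y) +ᵥ (1 - r) • i) - (x +ᵥ r • u) = (1 - r) • i + r • u' := by
      rw [hu3, vadd_eq_add, vadd_eq_add]
      module
    change ((x - r • y) +ᵥ (1 - r) • i) - (x +ᵥ r • u) ∈ interior K
    rw [e]
    exact hKconv.combo_interior_self_mem_interior hi hu' (sub_pos.2 hr1) hr.le (by ring)
  have hdisj : Disjoint A (frontier K + frontier T) := by
    rw [Set.disjoint_left]
    rintro _ hz ⟨a, ha, t, ht, rfl⟩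
    have := hmem _ hz t (hT.isClosed.frontier_subset ht)
    rw [add_sub_cancel_right] at this
    exact ha.2 this
  have hAsub : A ⊆ K + T := fun z hz => by
    have ht : x +ᵥ r • u₀ ∈ T :=
      hTK ▸ Set.vadd_mem_vadd_set (Set.smul_mem_smul_set hu₀)
    exact ⟨_, interior_subset (hmem z hz _ ht), _, ht, sub_add_cancel _ _⟩
  have hfin := (hK.add hT).measure_ne_top (μ := volume)
  have hFsub : frontier K + frontier T ⊆ K + T :=
    Set.add_subset_add hK.isClosed.frontier_subset hT.isClosed.frontier_subset
  have h := measureReal_mono (Set.union_subset hAsub hFsub) hfin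
  rw [measureReal_union hdisj (isCompact_frontier_add_frontier hK hT).measurableSet
    (measure_ne_top_of_subset hAsub hfin) (measure_ne_top_of_subset hFsub hfin), hAvol, hsum,
    volume_real_vadd, volume_real_smul, abs_of_pos (by positivity)] at h
  linarith

lemma volume_real_frontier_add_le_of_homothetic_two {K T : Set (EuclideanSpace ℝ (Fin 2))} {r : ℝ}
    (hr : 0 < r) (hr1 : r < 1) (hK : IsCompact K) (hKconv : Convex ℝ K)
    (hKint : (interior K).Nonempty) {x y : EuclideanSpace ℝ (Fin 2)} (hTK : T = x +ᵥ r • K)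
    (hy : -K = y +ᵥ K) :
    volume.real (frontier K + frontier T) ≤ 2 ^ 2 * √(volume.real K * volume.real T) := by
  refine (volume_real_frontier_add_le_of_homothetic hr hr1 hK hKconv hKint hTK hy).trans_eq ?_
  have h : volume.real K * volume.real T = (r * volume.real K) ^ 2 := by
    rw [hTK, volume_real_vadd, volume_real_smul, abs_of_pos hr]
    ring
  rw [h, Real.sqrt_sq (mul_nonneg hr.le measureReal_nonneg)]
  ring

lemma eq_vadd_smul_symm {r : ℝ} (hr : r ≠ 0) {x : EuclideanSpace ℝ (Fin n)}
    (h : T = x +ᵥ r • K) : K = (-r⁻¹ • x) +ᵥ r⁻¹ • T := by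
  ext u
  rw [mem_vadd_smul_iff (inv_ne_zero hr), inv_inv, h, mem_vadd_smul_iff hr, neg_smul,
    sub_neg_eq_add, smul_add, smul_inv_smul₀ hr, add_sub_cancel_right, inv_smul_smul₀ hr]

lemma exists_neg_eq_vadd_of_eq_vadd_smul {r : ℝ} (hr : r ≠ 0) {x y : EuclideanSpace ℝ (Fin n)}
    (h : T = x +ᵥ r • K) (hy : -K = y +ᵥ K) :
    ∃ z : EuclideanSpace ℝ (Fin n), -T = z +ᵥ T := by
  refine ⟨r • y - (2 : ℝ) • x, ?_⟩
  ext u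
  have e1 : r⁻¹ • (-u - x) = -(r⁻¹ • (u + x)) := by module
  have e2 : r⁻¹ • (-(r • y - (2 : ℝ) • x) + u - x) = -y + r⁻¹ • (u + x) := by
    have : y = r⁻¹ • r • y := (inv_smul_smul₀ hr y).symm
    nth_rewrite 2 [this]
    module
  rw [Set.mem_vadd_set_iff_neg_vadd_mem, vadd_eq_add, Set.mem_neg, h, mem_vadd_smul_iff hr,
    mem_vadd_smul_iff hr, e1, e2, ← Set.mem_neg, hy, Set.mem_vadd_set_iff_neg_vadd_mem, vadd_eq_add]

end Main

theorem boundary_sum_average_equality_cases (n : ℕ) (hn : 2 ≤ n)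
    (K T : Set (EuclideanSpace ℝ (Fin n)))
    (hK : IsCompact K) (hKconv : Convex ℝ K) (hKint : (interior K).Nonempty)
    (hT : IsCompact T) (hTconv : Convex ℝ T) (hTint : (interior T).Nonempty) :
    (volume ((2:ℝ)⁻¹ • (frontier K + frontier T))).toReal =
      Real.sqrt ((volume K).toReal * (volume T).toReal) ↔
    ((∃ x : EuclideanSpace ℝ (Fin n), T = x +ᵥ K) ∨
      (n = 2 ∧ (∃ x : EuclideanSpace ℝ (Fin n), ∃ r : ℝ, 0 < r ∧ T = x +ᵥ r • K) ∧
        (∃ y : EuclideanSpace ℝ (Fin n), -K = y +ᵥ K))) := by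
  have hLHS : (volume ((2:ℝ)⁻¹ • (frontier K + frontier T))).toReal =
      Real.sqrt ((volume K).toReal * (volume T).toReal) ↔
      volume.real (frontier K + frontier T) = 2 ^ n * √(volume.real K * volume.real T) := by
    simp only [← measureReal_def]
    rw [volume_real_smul, abs_of_pos (by norm_num), inv_pow, inv_mul_eq_iff_eq_mul₀ (by positivity)]
  rw [hLHS]
  have hlow := two_pow_mul_sqrt_le hn hK hKconv hKint hT hTconv hTint
  constructor
  · intro heq
    rcases le_total (volume.real T) (volume.real K) with hle | hle
    · exact equality_cases_of_volume_le hn hK hKconv hKint hT hTconv hTint hle heq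
    · rw [mul_comm (volume.real K), add_comm (frontier K)] at heq
      rcases equality_cases_of_volume_le hn hT hTconv hTint hK hKconv hKint hle heq with
        ⟨x, hx⟩ | ⟨hn2, ⟨x, r, hr, hx⟩, y, hy⟩
      · exact Or.inl ⟨-x, by rw [hx, neg_vadd_vadd]⟩
      · exact Or.inr ⟨hn2, ⟨_, r⁻¹, inv_pos.2 hr, eq_vadd_smul_symm hr.ne' hx⟩,
          exists_neg_eq_vadd_of_eq_vadd_smul hr.ne' hx hy⟩
  · refine fun h => le_antisymm ?_ hlow
    rcases h with ⟨x, hx⟩ | ⟨rfl, ⟨x, r, hr, hx⟩, y, hy⟩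
    · exact volume_real_frontier_add_le_of_eq_vadd hK hKconv x hx
    rcases lt_trichotomy r 1 with hr1 | rfl | hr1
    · exact volume_real_frontier_add_le_of_homothetic_two hr hr1 hK hKconv hKint hx hy
    · exact volume_real_frontier_add_le_of_eq_vadd hK hKconv x (by rwa [one_smul] at hx)
    · obtain ⟨z, hz⟩ := exists_neg_eq_vadd_of_eq_vadd_smul hr.ne' hx hy
      rw [mul_comm (volume.real K), add_comm (frontier K)]
      exact volume_real_frontier_add_le_of_homothetic_two (inv_pos.2 hr) (inv_lt_one_of_one_lt₀ hr1)
        hT hTconv hTint (eq_vadd_smul_symm hr.ne' hx) hz
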